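/- arXiv:1705.06894 — 8 statements merged into one kernel-verified Lean document; each statement's English description precedes it below -/
import Mathlib

section
/- For all reals t ≥ 1, ε ∈ (0,1), c > 0 and 0 < ω ≤ 1: if (1/t)·log(log((1+ε)t)/ω) ≥ c, then t ≤ (1/c)·log(2·log((1+ε)/(c·ω))/ω). -/
/-!
Put `a = 1 + ε` and `y = a * t`. Since `log x ≤ x`, the hypothesis `c * t ≤ log (log y / ω)` gives
`k * y ≤ log y` with `k = c * ω / a`. Since `log y ≤ √y`, this forces `k * y ≤ √y`, that is
`log y ≤ 2 * log k⁻¹`. Inserting this bound for the inner logarithm back into the hypothesis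
bounds `c * t`.
-/

theorem log_le_sqrt {x : ℝ} (hx : 0 ≤ x) : Real.log x ≤ √x := by
  obtain rfl | hx_pos := hx.eq_or_lt
  · simp
  have hsqrt : 0 < √x := Real.sqrt_pos.2 hx_pos
  -- Halving first is what makes the constant `1`: `log √x ≤ √x` alone only gives `2 * √x`.
  have half_bound : Real.log (√x / 2) ≤ √x / 2 - 1 :=
    Real.log_le_sub_one_of_pos (half_pos hsqrt)
  rw [Real.log_div hsqrt.ne' two_ne_zero, Real.log_sqrt hx] at half_bound
  linarith [Real.log_two_lt_d9]

theorem log_le_two_mul_log_inv_of_mul_le_log {k y : ℝ} (hk : 0 < k) (hy : 0 < y)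
    (h : k * y ≤ Real.log y) : Real.log y ≤ 2 * Real.log k⁻¹ := by
  have key : Real.log k + Real.log y ≤ Real.log y / 2 :=
    calc Real.log k + Real.log y = Real.log (k * y) := (Real.log_mul hk.ne' hy.ne').symm
      _ ≤ Real.log √y := Real.log_le_log (mul_pos hk hy) (h.trans (log_le_sqrt hy.le))
      _ = Real.log y / 2 := Real.log_sqrt hy.le
  rw [Real.log_inv]
  linarith

theorem mul_le_of_le_log_div {x z ω : ℝ} (hω : 0 < ω) (hz : 0 ≤ z)
    (h : x ≤ Real.log (z / ω)) : x * ω ≤ z :=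
  (le_div_iff₀ hω).1 (h.trans (Real.log_le_self (div_nonneg hz hω.le)))

theorem log_mul_le_of_mul_le_log_log_div {a t c ω : ℝ} (ht : 0 < t) (hat : 1 < a * t)
    (hc : 0 < c) (hω : 0 < ω) (h : c * t ≤ Real.log (Real.log (a * t) / ω)) :
    Real.log (a * t) ≤ 2 * Real.log (a / (c * ω)) := by
  have ha : 0 < a := pos_of_mul_pos_left (one_pos.trans hat) ht.le
  have linear_le_log : c * ω / a * (a * t) ≤ Real.log (a * t) :=
    calc c * ω / a * (a * t) = c * t * ω := by field_simp
      _ ≤ Real.log (a * t) := mul_le_of_le_log_div hω (Real.log_pos hat).le h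
  simpa only [inv_div] using
    log_le_two_mul_log_inv_of_mul_le_log (by positivity) (by positivity) linear_le_log

theorem stmt_1_general {a t c ω : ℝ} (ht : 0 < t) (hat : 1 < a * t) (hc : 0 < c) (hω : 0 < ω)
    (h : c ≤ (1 / t) * Real.log (Real.log (a * t) / ω)) :
    t ≤ (1 / c) * Real.log (2 * Real.log (a / (c * ω)) / ω) := by
  have hct : c * t ≤ Real.log (Real.log (a * t) / ω) := by
    rwa [one_div_mul_eq_div, le_div_iff₀ ht] at h
  have inner_pos : 0 < Real.log (a * t) / ω := div_pos (Real.log_pos hat) hω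
  have inner_le : Real.log (a * t) / ω ≤ 2 * Real.log (a / (c * ω)) / ω := by
    gcongr
    exact log_mul_le_of_mul_le_log_log_div ht hat hc hω hct
  rw [one_div_mul_eq_div, le_div_iff₀' hc]
  exact hct.trans (Real.log_le_log inner_pos inner_le)

/-- For all reals t ≥ 1, ε ∈ (0,1), c > 0 and 0 < ω ≤ 1: if
(1/t)·log(log((1+ε)t)/ω) ≥ c, then t ≤ (1/c)·log(2·log((1+ε)/(c·ω))/ω). -/
theorem stmt_1 (t ε c ω : ℝ) (ht : 1 ≤ t) (hε0 : 0 < ε) (hε1 : ε < 1)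
    (hc : 0 < c) (hω0 : 0 < ω) (hω1 : ω ≤ 1)
    (h : (1 / t) * Real.log (Real.log ((1 + ε) * t) / ω) ≥ c) :
    t ≤ (1 / c) * Real.log (2 * Real.log ((1 + ε) / (c * ω)) / ω) :=
  stmt_1_general (by positivity) (one_lt_mul_of_lt_of_le (by linarith) ht) hc hω0 h
end

section
/- Suppose μ̂_h − r_h < μ̂_l + r_l (the stopping condition of lil'RandLUCB fails), and let c ∈ {h, l} be an arm with r_c = max(r_h, r_l). Then r_c ≥ Δ_c/8. -/
/-!
The lower confidence bound of `h` exceeds `μ_(K+1)` by less than `2 r_l`. Indeed, if `l ∉ OPT`, then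
the interval of `l` reaches above this bound but contains `μ_l ≤ μ_(K+1)`. If `l ∈ OPT`, then
`High` and `OPT` have equal size but differ, so there is `j ∈ High \ OPT`, and already the lower
bound of `j` lies below `μ_j ≤ μ_(K+1)`. Dually, the upper confidence bound of `l` falls short of
`μ_(K)` by less than `2 r_h`. Comparing these two bounds with the true means of `h` and `l`
yields `Δ_c < 4 r_c`.
-/

section

variable {ι R : Type*}

/-- The gap `Δ_i` of arm `i` in a Best-K-Arm instance with optimal set `OPT` and means `μ`. The
order statistics `μ_(K)` and `μ_(K+1)` enter as the parameters `mK` and `mK1`. -/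
def gap [DecidableEq ι] [Sub R] (OPT : Finset ι) (mK mK1 : R) (μ : ι → R) (i : ι) : R :=
  if i ∈ OPT then μ i - mK1 else mK - μ i

lemma exists_mem_notMem_of_card_eq {s t : Finset ι} (hst : s.card = t.card) {i : ι}
    (his : i ∈ s) (hit : i ∉ t) : ∃ j ∈ t, j ∉ s := by
  by_contra! hts
  exact hit (Finset.eq_of_subset_of_card_le hts hst.le ▸ his)

variable [CommRing R] [LinearOrder R] [IsStrictOrderedRing R]
  {OPT High : Finset ι} {μ μh r : ι → R} {mK mK1 : R} {h l : ι}

lemma lower_bound_lt_of_mem_opt (hcard : OPT.card = High.card) (hout : ∀ i ∉ OPT, μ i ≤ mK1)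
    (hconf : ∀ i, |μh i - μ i| < r i) (hhmin : ∀ i ∈ High, μh h - r h ≤ μh i - r i)
    (hlH : l ∉ High) (hlOPT : l ∈ OPT) : μh h - r h < mK1 := by
  obtain ⟨j, hjH, hjOPT⟩ := exists_mem_notMem_of_card_eq hcard hlOPT hlH
  calc μh h - r h ≤ μh j - r j := hhmin j hjH
    _ < μ j := by linarith [(abs_lt.mp (hconf j)).2]
    _ ≤ mK1 := hout j hjOPT

lemma lt_upper_bound_of_notMem_opt (hcard : OPT.card = High.card) (hin : ∀ i ∈ OPT, mK ≤ μ i)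
    (hconf : ∀ i, |μh i - μ i| < r i) (hlmax : ∀ i ∉ High, μh i + r i ≤ μh l + r l)
    (hhH : h ∈ High) (hhOPT : h ∉ OPT) : mK < μh l + r l := by
  obtain ⟨j, hjOPT, hjH⟩ := exists_mem_notMem_of_card_eq hcard.symm hhH hhOPT
  calc mK ≤ μ j := hin j hjOPT
    _ < μh j + r j := by linarith [(abs_lt.mp (hconf j)).1]
    _ ≤ μh l + r l := hlmax j hjH

lemma lower_bound_lt_add_two_mul (hcard : OPT.card = High.card) (hout : ∀ i ∉ OPT, μ i ≤ mK1)
    (hconf : ∀ i, |μh i - μ i| < r i) (hhmin : ∀ i ∈ High, μh h - r h ≤ μh i - r i)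
    (hlH : l ∉ High) (hnstop : μh h - r h < μh l + r l) : μh h - r h < mK1 + 2 * r l := by
  by_cases hlOPT : l ∈ OPT
  · have hrl : 0 < r l := (abs_nonneg _).trans_lt (hconf l)
    linarith [lower_bound_lt_of_mem_opt hcard hout hconf hhmin hlH hlOPT]
  · calc μh h - r h < μh l + r l := hnstop
      _ < μ l + 2 * r l := by linarith [(abs_lt.mp (hconf l)).2]
      _ ≤ mK1 + 2 * r l := by linarith [hout l hlOPT]

lemma sub_two_mul_lt_upper_bound (hcard : OPT.card = High.card) (hin : ∀ i ∈ OPT, mK ≤ μ i)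
    (hconf : ∀ i, |μh i - μ i| < r i) (hlmax : ∀ i ∉ High, μh i + r i ≤ μh l + r l)
    (hhH : h ∈ High) (hnstop : μh h - r h < μh l + r l) : mK - 2 * r h < μh l + r l := by
  by_cases hhOPT : h ∈ OPT
  · calc mK - 2 * r h ≤ μ h - 2 * r h := by linarith [hin h hhOPT]
      _ < μh h - r h := by linarith [(abs_lt.mp (hconf h)).1]
      _ < μh l + r l := hnstop
  · have hrh : 0 < r h := (abs_nonneg _).trans_lt (hconf h)
    linarith [lt_upper_bound_of_notMem_opt hcard hin hconf hlmax hhH hhOPT]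

lemma gap_high_lt_four_mul [DecidableEq ι] (hconf : |μh h - μ h| < r h) (hlh : μh l ≤ μh h)
    (hr : r l ≤ r h) (hlower : μh h - r h < mK1 + 2 * r l)
    (hupper : mK - 2 * r h < μh l + r l) : gap OPT mK mK1 μ h < 4 * r h := by
  obtain ⟨hconf_lower, hconf_upper⟩ := abs_lt.mp hconf
  unfold gap
  split_ifs
  · calc μ h - mK1 < μh h + r h - mK1 := by linarith
      _ < 2 * r h + 2 * r l := by linarith
      _ ≤ 4 * r h := by linarith
  · calc mK - μ h < μh l + r l + 2 * r h - μ h := by linarith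
      _ ≤ (μh h - μ h) + r l + 2 * r h := by linarith
      _ ≤ 4 * r h := by linarith

lemma gap_low_lt_four_mul [DecidableEq ι] (hconf : |μh l - μ l| < r l) (hlh : μh l ≤ μh h)
    (hr : r h ≤ r l) (hlower : μh h - r h < mK1 + 2 * r l)
    (hupper : mK - 2 * r h < μh l + r l) : gap OPT mK mK1 μ l < 4 * r l := by
  obtain ⟨hconf_lower, hconf_upper⟩ := abs_lt.mp hconf
  unfold gap
  split_ifs
  · calc μ l - mK1 < μ l - μh h + r h + 2 * r l := by linarith
      _ ≤ (μ l - μh l) + r h + 2 * r l := by linarith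
      _ ≤ 4 * r l := by linarith
  · calc mK - μ l < mK - μh l + r l := by linarith
      _ < 2 * r h + 2 * r l := by linarith
      _ ≤ 4 * r l := by linarith

theorem stmt_7_general [DecidableEq ι] (hcard : OPT.card = High.card)
    (hin : ∀ i ∈ OPT, mK ≤ μ i) (hout : ∀ i ∉ OPT, μ i ≤ mK1)
    (hconf : ∀ i, |μh i - μ i| < r i)
    (hHigh : ∀ i ∈ High, ∀ j ∉ High, μh j ≤ μh i)
    (hhH : h ∈ High) (hlH : l ∉ High)
    (hhmin : ∀ i ∈ High, μh h - r h ≤ μh i - r i)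
    (hlmax : ∀ i ∉ High, μh i + r i ≤ μh l + r l)
    (hnstop : μh h - r h < μh l + r l)
    {c : ι} (hc : c = h ∨ c = l) (hcr : r c = max (r h) (r l)) :
    gap OPT mK mK1 μ c < 4 * r c := by
  have hlh : μh l ≤ μh h := hHigh h hhH l hlH
  have hlower := lower_bound_lt_add_two_mul hcard hout hconf hhmin hlH hnstop
  have hupper := sub_two_mul_lt_upper_bound hcard hin hconf hlmax hhH hnstop
  rcases hc with rfl | rfl
  · exact gap_high_lt_four_mul (hconf _) hlh (hcr ▸ le_max_right _ _) hlower hupper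
  · exact gap_low_lt_four_mul (hconf _) hlh (hcr ▸ le_max_left _ _) hlower hupper

end

/-- Suppose μ̂_h − r_h < μ̂_l + r_l (the stopping condition of lil'RandLUCB
fails), and let c ∈ {h, l} be an arm with r_c = max(r_h, r_l). Then r_c ≥ Δ_c/8. -/
theorem stmt_7 {N K : ℕ} (hK1 : 1 ≤ K) (hKN : K < N)
    (μ : Fin N → ℝ) (OPT : Finset (Fin N)) (mK mK1 : ℝ)
    (hcard : OPT.card = K)
    (horder : mK1 < mK)
    (hin : ∀ i ∈ OPT, mK ≤ μ i)
    (hout : ∀ i ∉ OPT, μ i ≤ mK1)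
    (hattK : ∃ i ∈ OPT, μ i = mK)
    (hattK1 : ∃ i ∉ OPT, μ i = mK1)
    (Δ : Fin N → ℝ)
    (hΔ : ∀ i, Δ i = if i ∈ OPT then μ i - mK1 else mK - μ i)
    (μh r : Fin N → ℝ) (hr : ∀ i, 0 < r i) (hconf : ∀ i, |μh i - μ i| < r i)
    (High : Finset (Fin N)) (hHcard : High.card = K)
    (hHigh : ∀ i ∈ High, ∀ j ∉ High, μh j ≤ μh i)
    (h l : Fin N) (hhH : h ∈ High) (hlH : l ∉ High)
    (hhmin : ∀ i ∈ High, μh h - r h ≤ μh i - r i)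
    (hlmax : ∀ i ∉ High, μh i + r i ≤ μh l + r l)
    (hnstop : μh h - r h < μh l + r l)
    (c : Fin N) (hc : c = h ∨ c = l) (hcr : r c = max (r h) (r l)) :
    r c ≥ Δ c / 8 := by
  have hgap : Δ c < 4 * r c := hΔ c ▸ stmt_7_general (hcard.trans hHcard.symm) hin hout hconf
    hHigh hhH hlH hhmin hlmax hnstop hc hcr
  linarith [hr c]
end

section
/- Suppose h ∈ OPT, l ∉ OPT, and μ̂_h − r_h < μ̂_l + r_l. Then r_h + r_l > (Δ_h + Δ_l)/4, and consequently any c ∈ {h, l} with r_c = max(r_h, r_l) satisfies r_c ≥ Δ_c/8. -/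
/-!
Since `μ l ≤ μ_(K+1)` and `μ_(K) ≤ μ h`, the gaps of `h` and of `l` are both at most `μ h - μ l`.
The confidence intervals of `h` and `l` overlap, so `μ h - μ l < 2 * (r h + r l)`. Adding the two
gap bounds gives the first claim; using `r h + r l ≤ 2 * r c` in each of them separately gives the
second, with the constant `4` in place of `8`.
-/

theorem sub_lt_two_mul_add_of_sub_lt_add {R : Type*} [CommRing R] [LinearOrder R]
    [IsStrictOrderedRing R] {x y x' y' r s : R} (hx : |x' - x| < r) (hy : |y' - y| < s)
    (hoverlap : x' - r < y' + s) : x - y < 2 * (r + s) := by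
  have hx_lt : x < x' + r := sub_lt_iff_lt_add'.mp (abs_sub_lt_iff.mp hx).2
  have hy_gt : y' - s < y := sub_lt_comm.mp (abs_sub_lt_iff.mp hy).1
  linarith

section Gap

variable {ι R : Type*} [AddCommGroup R] [LinearOrder R] [IsOrderedAddMonoid R]
  {OPT : Set ι} [DecidablePred (· ∈ OPT)] {μ Δ : ι → R} {a b : R} {h l : ι}

theorem gap_le_sub_of_mem (hout : ∀ i ∉ OPT, μ i ≤ b)
    (hΔ : ∀ i, Δ i = if i ∈ OPT then μ i - b else a - μ i) (hh : h ∈ OPT) (hl : l ∉ OPT) :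
    Δ h ≤ μ h - μ l := by
  rw [hΔ, if_pos hh]
  exact sub_le_sub_left (hout l hl) (μ h)

theorem gap_le_sub_of_notMem (hin : ∀ i ∈ OPT, a ≤ μ i)
    (hΔ : ∀ i, Δ i = if i ∈ OPT then μ i - b else a - μ i) (hh : h ∈ OPT) (hl : l ∉ OPT) :
    Δ l ≤ μ h - μ l := by
  rw [hΔ, if_neg hl]
  exact sub_le_sub_right (hin h hh) (μ l)

end Gap

theorem stmt_9_general {ι 𝕜 : Type*} [Field 𝕜] [LinearOrder 𝕜] [IsStrictOrderedRing 𝕜]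
    {OPT : Set ι} [DecidablePred (· ∈ OPT)] {μ Δ μh r : ι → 𝕜} {a b : 𝕜} {h l : ι}
    (hin : ∀ i ∈ OPT, a ≤ μ i) (hout : ∀ i ∉ OPT, μ i ≤ b)
    (hΔ : ∀ i, Δ i = if i ∈ OPT then μ i - b else a - μ i)
    (hconf_h : |μh h - μ h| < r h) (hconf_l : |μh l - μ l| < r l)
    (hhO : h ∈ OPT) (hlO : l ∉ OPT) (hnstop : μh h - r h < μh l + r l) :
    (Δ h + Δ l) / 4 < r h + r l ∧
      ∀ c, (c = h ∨ c = l) → r c = max (r h) (r l) → Δ c / 4 < r c := by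
  have hdiff : μ h - μ l < 2 * (r h + r l) :=
    sub_lt_two_mul_add_of_sub_lt_add hconf_h hconf_l hnstop
  have hΔh : Δ h ≤ μ h - μ l := gap_le_sub_of_mem hout hΔ hhO hlO
  have hΔl : Δ l ≤ μ h - μ l := gap_le_sub_of_notMem hin hΔ hhO hlO
  refine ⟨by linarith, fun c hc hmax => ?_⟩
  have hΔc : Δ c ≤ μ h - μ l := by rcases hc with rfl | rfl <;> assumption
  have hsum : r h + r l ≤ 2 * r c := by
    rw [hmax, two_mul]
    exact add_le_add (le_max_left _ _) (le_max_right _ _)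
  linarith

/-- Suppose h ∈ OPT, l ∉ OPT, and μ̂_h − r_h < μ̂_l + r_l. Then
r_h + r_l > (Δ_h + Δ_l)/4, and consequently any c ∈ {h, l} with r_c = max(r_h, r_l)
satisfies r_c ≥ Δ_c/8. -/
theorem stmt_9 {N K : ℕ} (hK1 : 1 ≤ K) (hKN : K < N)
    (μ : Fin N → ℝ) (OPT : Finset (Fin N)) (mK mK1 : ℝ)
    (hcard : OPT.card = K)
    (horder : mK1 < mK)
    (hin : ∀ i ∈ OPT, mK ≤ μ i)
    (hout : ∀ i ∉ OPT, μ i ≤ mK1)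
    (hattK : ∃ i ∈ OPT, μ i = mK)
    (hattK1 : ∃ i ∉ OPT, μ i = mK1)
    (Δ : Fin N → ℝ)
    (hΔ : ∀ i, Δ i = if i ∈ OPT then μ i - mK1 else mK - μ i)
    (μh r : Fin N → ℝ) (hr : ∀ i, 0 < r i) (hconf : ∀ i, |μh i - μ i| < r i)
    (High : Finset (Fin N)) (hHcard : High.card = K)
    (hHigh : ∀ i ∈ High, ∀ j ∉ High, μh j ≤ μh i)
    (h l : Fin N) (hhH : h ∈ High) (hlH : l ∉ High)
    (hhmin : ∀ i ∈ High, μh h - r h ≤ μh i - r i)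
    (hlmax : ∀ i ∉ High, μh i + r i ≤ μh l + r l)
    (hhO : h ∈ OPT) (hlO : l ∉ OPT) (hnstop : μh h - r h < μh l + r l) :
    r h + r l > (Δ h + Δ l) / 4 ∧
      ∀ c : Fin N, (c = h ∨ c = l) → r c = max (r h) (r l) → r c ≥ Δ c / 8 := by
  obtain ⟨hsum, hmax⟩ := stmt_9_general (OPT := (OPT : Set (Fin N))) hin hout hΔ (hconf h) (hconf l)
    hhO hlO hnstop
  exact ⟨hsum, fun c hc hrc => by linarith [hmax c hc hrc, hr c]⟩
end

section
/- Suppose h ∈ OPT and l ∈ OPT. Then r_h > Δ_h/4. -/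
/-!
Since `l` lies in `OPT` but not in `High`, and the two sets have the same size, `High` contains
a suboptimal arm `j`. The lower confidence bound of `h` is at most that of `j`, which is less than
`μ j ≤ μ_(K+1)`. As `μ h` exceeds the lower confidence bound of `h` by less than `2 r_h`, this
gives `Δ_h < 2 r_h`.
-/

theorem not_subset_of_card_le_of_mem_of_notMem {α : Type*} {s t : Finset α} {a : α}
    (hcard : t.card ≤ s.card) (hat : a ∈ t) (has : a ∉ s) : ¬ s ⊆ t :=
  fun hst => has (Finset.eq_of_subset_of_card_le hst hcard ▸ hat)

section ConfidenceInterval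

variable {R : Type*} [AddCommGroup R] [LinearOrder R] [IsOrderedAddMonoid R]

theorem sub_lt_two_nsmul_radius_of_lower_bound_le {x y xhat yhat rx ry : R}
    (hx : |xhat - x| < rx) (hy : |yhat - y| < ry) (hlower : xhat - rx ≤ yhat - ry) :
    x - y < 2 • rx := by
  have x_lt_upper : x < xhat + rx := sub_lt_iff_lt_add.mp (sub_lt_of_abs_sub_lt_left hx)
  have lower_lt_y : xhat - rx < y := hlower.trans_lt (sub_lt_of_abs_sub_lt_right hy)
  calc
    x - y < (xhat + rx) - (xhat - rx) := sub_lt_sub x_lt_upper lower_lt_y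
    _ = 2 • rx := by abel

theorem stmt_10_general {ι : Type*} {OPT High : Finset ι} {μ μh r : ι → R} {m : R} {h l : ι}
    (hcard : OPT.card ≤ High.card) (hout : ∀ i ∉ OPT, μ i ≤ m)
    (hconf : ∀ i ∈ High, |μh i - μ i| < r i)
    (hhH : h ∈ High) (hhmin : ∀ i ∈ High, μh h - r h ≤ μh i - r i)
    (hlO : l ∈ OPT) (hlH : l ∉ High) :
    μ h - m < 2 • r h := by
  obtain ⟨j, hjH, hjO⟩ : ∃ j ∈ High, j ∉ OPT :=
    Finset.not_subset.mp (not_subset_of_card_le_of_mem_of_notMem hcard hlO hlH)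
  calc
    μ h - m ≤ μ h - μ j := sub_le_sub_left (hout j hjO) _
    _ < 2 • r h :=
      sub_lt_two_nsmul_radius_of_lower_bound_le (hconf h hhH) (hconf j hjH) (hhmin j hjH)

end ConfidenceInterval

/-- Suppose h ∈ OPT and l ∈ OPT. Then r_h > Δ_h/4. -/
theorem stmt_10 {N K : ℕ} (hK1 : 1 ≤ K) (hKN : K < N)
    (μ : Fin N → ℝ) (OPT : Finset (Fin N)) (mK mK1 : ℝ)
    (hcard : OPT.card = K)
    (horder : mK1 < mK)
    (hin : ∀ i ∈ OPT, mK ≤ μ i)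
    (hout : ∀ i ∉ OPT, μ i ≤ mK1)
    (hattK : ∃ i ∈ OPT, μ i = mK)
    (hattK1 : ∃ i ∉ OPT, μ i = mK1)
    (Δ : Fin N → ℝ)
    (hΔ : ∀ i, Δ i = if i ∈ OPT then μ i - mK1 else mK - μ i)
    (μh r : Fin N → ℝ) (hr : ∀ i, 0 < r i) (hconf : ∀ i, |μh i - μ i| < r i)
    (High : Finset (Fin N)) (hHcard : High.card = K)
    (hHigh : ∀ i ∈ High, ∀ j ∉ High, μh j ≤ μh i)
    (h l : Fin N) (hhH : h ∈ High) (hlH : l ∉ High)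
    (hhmin : ∀ i ∈ High, μh h - r h ≤ μh i - r i)
    (hlmax : ∀ i ∉ High, μh i + r i ≤ μh l + r l)
    (hhO : h ∈ OPT) (hlO : l ∈ OPT) :
    r h > Δ h / 4 := by
  have gap_lt : μ h - mK1 < 2 • r h :=
    stmt_10_general (hcard.trans hHcard.symm).le hout (fun i _ => hconf i) hhH hhmin hlO hlH
  rw [hΔ, if_pos hhO]
  linarith [hr h, two_nsmul (r h)]
end

section
/- Suppose h ∈ OPT, l ∈ OPT, and r_l ≥ r_h. Then r_l > Δ_l/6. -/
/-!
`High` has as many arms as `OPT` but misses `l ∈ OPT`, so it contains some suboptimal `x`. The lower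
confidence bound of `x` lies below `μ x ≤ μ_(K+1)`, hence so does the smallest one in `High`, that
of `h`. Therefore `μ l < μh l + r l ≤ μh h + r l < μ_(K+1) + r h + r l`, which gives
`Δ l < r h + r l ≤ 2 * r l`.
-/

theorem exists_mem_notMem_of_card_le {ι : Type*} {s t : Finset ι} {a : ι}
    (hcard : s.card ≤ t.card) (has : a ∈ s) (hat : a ∉ t) : ∃ x ∈ t, x ∉ s := by
  by_contra! hts
  exact hat (Finset.eq_of_subset_of_card_le hts hcard ▸ has)

section ConfidenceBounds

variable {ι G : Type*} [AddCommGroup G] [LinearOrder G] [IsOrderedAddMonoid G]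
  {μ μh r : ι → G}

theorem min_lower_confidence_bound_lt {s : Set ι} {h x : ι} {m : G}
    (hmin : ∀ i ∈ s, μh h - r h ≤ μh i - r i) (hxs : x ∈ s)
    (hconf : |μh x - μ x| < r x) (hxm : μ x ≤ m) : μh h - r h < m :=
  calc
    μh h - r h ≤ μh x - r x := hmin x hxs
    _ < μ x := sub_lt_comm.mp (abs_sub_lt_iff.mp hconf).1
    _ ≤ m := hxm

theorem stmt_11_general {OPT High : Finset ι} {m : G} {h l : ι}
    (hcard : OPT.card ≤ High.card) (hout : ∀ i ∉ OPT, μ i ≤ m)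
    (hconf : ∀ i, |μh i - μ i| < r i)
    (hHigh : ∀ i ∈ High, ∀ j ∉ High, μh j ≤ μh i)
    (hhH : h ∈ High) (hlH : l ∉ High)
    (hhmin : ∀ i ∈ High, μh h - r h ≤ μh i - r i) (hlO : l ∈ OPT) :
    μ l - m < r h + r l := by
  obtain ⟨x, hxH, hxO⟩ := exists_mem_notMem_of_card_le hcard hlO hlH
  have hlower : μh h - r h < m :=
    min_lower_confidence_bound_lt (s := High) hhmin hxH (hconf x) (hout x hxO)
  have hupper : μ l < r l + μh l := sub_lt_iff_lt_add.mp (abs_sub_lt_iff.mp (hconf l)).2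
  rw [sub_lt_iff_lt_add]
  calc
    μ l < r l + μh l := hupper
    _ ≤ r l + μh h := by gcongr; exact hHigh h hhH l hlH
    _ ≤ r l + (r h + m) := by gcongr; exact (sub_lt_iff_lt_add'.mp hlower).le
    _ = r h + r l + m := by abel

end ConfidenceBounds

/-- Suppose h ∈ OPT, l ∈ OPT, and r_l ≥ r_h. Then r_l > Δ_l/6. -/
theorem stmt_11 {N K : ℕ} (hK1 : 1 ≤ K) (hKN : K < N)
    (μ : Fin N → ℝ) (OPT : Finset (Fin N)) (mK mK1 : ℝ)
    (hcard : OPT.card = K)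
    (horder : mK1 < mK)
    (hin : ∀ i ∈ OPT, mK ≤ μ i)
    (hout : ∀ i ∉ OPT, μ i ≤ mK1)
    (hattK : ∃ i ∈ OPT, μ i = mK)
    (hattK1 : ∃ i ∉ OPT, μ i = mK1)
    (Δ : Fin N → ℝ)
    (hΔ : ∀ i, Δ i = if i ∈ OPT then μ i - mK1 else mK - μ i)
    (μh r : Fin N → ℝ) (hr : ∀ i, 0 < r i) (hconf : ∀ i, |μh i - μ i| < r i)
    (High : Finset (Fin N)) (hHcard : High.card = K)
    (hHigh : ∀ i ∈ High, ∀ j ∉ High, μh j ≤ μh i)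
    (h l : Fin N) (hhH : h ∈ High) (hlH : l ∉ High)
    (hhmin : ∀ i ∈ High, μh h - r h ≤ μh i - r i)
    (hlmax : ∀ i ∉ High, μh i + r i ≤ μh l + r l)
    (hhO : h ∈ OPT) (hlO : l ∈ OPT) (hrl : r h ≤ r l) :
    r l > Δ l / 6 := by
  have hgap : μ l - mK1 < r h + r l :=
    stmt_11_general (hcard.trans hHcard.symm).le hout hconf hHigh hhH hlH hhmin hlO
  rw [hΔ l, if_pos hlO]
  linarith [hr l]
end

section
/- Suppose e ∈ M △ M̃ and u_e ≥ u_a for every a ∈ M △ M̃ (so e is the arm sampled by lil'CLUCB). Then u_e ≥ Δ_e/4. -/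
/-!
Let `c` bound the confidence radii on `M ∆ Mt`. Both `M` and `Mt` are approximately optimal for the
true means: an arm outside `M` beats an arm of `M` by at most `2 * c`, and an arm outside `Mt` beats
an arm of `Mt` by at most `4 * c`. Take `c = u e`. As `e` lies in exactly one of the two sets, one
of them disagrees with `OPT` about `e`; having the same size as `OPT`, it also disagrees about some
arm `j` in the opposite direction. Comparing `e` with `j` bounds the gap of `e` by `4 * u e`.
-/

open scoped symmDiff

theorem sdiff_nonempty_comm_of_card_eq {ι : Type*} [DecidableEq ι] {S T : Finset ι}
    (h : S.card = T.card) : (S \ T).Nonempty ↔ (T \ S).Nonempty := by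
  rw [← Finset.card_pos, ← Finset.card_pos, Finset.card_sdiff_comm h]

theorem exists_mem_notMem_of_card_eq_s14 {ι : Type*} {S T : Finset ι} {e : ι} (h : S.card = T.card)
    (heS : e ∈ S) (heT : e ∉ T) : ∃ j ∈ T, j ∉ S := by
  classical
  have hne : (S \ T).Nonempty := ⟨e, Finset.mem_sdiff.2 ⟨heS, heT⟩⟩
  obtain ⟨j, hj⟩ := (sdiff_nonempty_comm_of_card_eq h).1 hne
  exact ⟨j, Finset.mem_sdiff.1 hj⟩

/-- `T` consists of the largest values of `f` up to an error `ε`: no value outside `T` exceeds a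
value on `T` by more than `ε`. For `ε = 0` this is an exact set of `T.card` largest values. -/
def IsTopWithin {ι R : Type*} [Add R] [LE R] (ε : R) (f : ι → R) (T : Finset ι) : Prop :=
  ∀ i ∈ T, ∀ j ∉ T, f j ≤ f i + ε

namespace IsTopWithin

variable {ι R : Type*} {f : ι → R} {S T : Finset ι}

theorem zero_iff [AddZeroClass R] [LE R] :
    IsTopWithin 0 f T ↔ ∀ i ∈ T, ∀ j ∉ T, f j ≤ f i := by
  simp only [IsTopWithin, add_zero]

theorem mono [Add R] [Preorder R] [AddLeftMono R] {ε δ : R} (hT : IsTopWithin ε f T)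
    (h : ε ≤ δ) : IsTopWithin δ f T :=
  fun i hi j hj => (hT i hi j hj).trans (by gcongr)

variable [Add R] [LE R] {ε : R} {e : ι}

theorem exists_notMem_le_add (hT : IsTopWithin ε f T) (hcard : S.card = T.card)
    (heS : e ∈ S) (heT : e ∉ T) : ∃ j ∉ S, f e ≤ f j + ε := by
  obtain ⟨j, hjT, hjS⟩ := exists_mem_notMem_of_card_eq_s14 hcard heS heT
  exact ⟨j, hjS, hT j hjT e heT⟩

theorem exists_mem_le_add (hT : IsTopWithin ε f T) (hcard : S.card = T.card)
    (heS : e ∉ S) (heT : e ∈ T) : ∃ j ∈ S, f j ≤ f e + ε := by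
  obtain ⟨j, hjS, hjT⟩ := exists_mem_notMem_of_card_eq_s14 hcard.symm heT heS
  exact ⟨j, hjS, hT e heT j hjT⟩

end IsTopWithin

/-- The means `μ̃` least favourable to `M` among those compatible with the confidence intervals of
centre `μh` and radius `u`: lower endpoints on `M`, upper endpoints elsewhere. -/
def pessimisticMean {ι R : Type*} [Add R] [Sub R] [DecidableEq ι] (M : Finset ι) (μh u : ι → R)
    (i : ι) : R :=
  if i ∈ M then μh i - u i else μh i + u i

section pessimisticMean

variable {ι R : Type*} [DecidableEq ι] {M : Finset ι} {μh u : ι → R} {i : ι}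

section

variable [Add R] [Sub R]

theorem pessimisticMean_of_mem (hi : i ∈ M) : pessimisticMean M μh u i = μh i - u i :=
  if_pos hi

theorem pessimisticMean_of_notMem (hi : i ∉ M) : pessimisticMean M μh u i = μh i + u i :=
  if_neg hi

end

variable [CommRing R] [LinearOrder R] [IsStrictOrderedRing R] {μ : ι → R}

theorem pessimisticMean_le_of_mem (hconf : |μh i - μ i| ≤ u i) (hi : i ∈ M) :
    pessimisticMean M μh u i ≤ μ i := by
  rw [pessimisticMean_of_mem hi]
  linarith [(abs_le.1 hconf).2]

theorem le_pessimisticMean_of_notMem (hconf : |μh i - μ i| ≤ u i) (hi : i ∉ M) :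
    μ i ≤ pessimisticMean M μh u i := by
  rw [pessimisticMean_of_notMem hi]
  linarith [(abs_le.1 hconf).1]

theorem abs_pessimisticMean_sub_le (hconf : |μh i - μ i| ≤ u i) :
    |pessimisticMean M μh u i - μ i| ≤ 2 * u i := by
  obtain ⟨hlower, hupper⟩ := abs_le.1 hconf
  rw [abs_le]
  by_cases hi : i ∈ M
  · rw [pessimisticMean_of_mem hi]
    constructor <;> linarith
  · rw [pessimisticMean_of_notMem hi]
    constructor <;> linarith

variable {Mt : Finset ι} {c : R}

theorem pessimisticMean_le_add_two_mul (hconf : |μh i - μ i| ≤ u i) (hc₀ : 0 ≤ c)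
    (hc : ∀ a ∈ M ∆ Mt, u a ≤ c) (hi : i ∈ Mt) :
    pessimisticMean M μh u i ≤ μ i + 2 * c := by
  by_cases hiM : i ∈ M
  · linarith [pessimisticMean_le_of_mem hconf hiM]
  · have hui : u i ≤ c := hc i (Finset.mem_symmDiff.2 (.inr ⟨hi, hiM⟩))
    linarith [(abs_le.1 (abs_pessimisticMean_sub_le (M := M) hconf)).2]

theorem le_pessimisticMean_add_two_mul (hconf : |μh i - μ i| ≤ u i) (hc₀ : 0 ≤ c)
    (hc : ∀ a ∈ M ∆ Mt, u a ≤ c) (hi : i ∉ Mt) :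
    μ i ≤ pessimisticMean M μh u i + 2 * c := by
  by_cases hiM : i ∈ M
  · have hui : u i ≤ c := hc i (Finset.mem_symmDiff.2 (.inl ⟨hiM, hi⟩))
    linarith [(abs_le.1 (abs_pessimisticMean_sub_le (M := M) hconf)).1]
  · linarith [le_pessimisticMean_of_notMem hconf hiM]

theorem isTopWithin_four_mul_of_pessimisticMean (hconf : ∀ i, |μh i - μ i| ≤ u i)
    (hMt : IsTopWithin 0 (pessimisticMean M μh u) Mt) (hc₀ : 0 ≤ c)
    (hc : ∀ a ∈ M ∆ Mt, u a ≤ c) : IsTopWithin (4 * c) μ Mt := by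
  intro i hi j hj
  calc μ j ≤ pessimisticMean M μh u j + 2 * c :=
        le_pessimisticMean_add_two_mul (hconf j) hc₀ hc hj
    _ ≤ pessimisticMean M μh u i + 2 * c := by linarith [hMt i hi j hj]
    _ ≤ μ i + 2 * c + 2 * c := by
        linarith [pessimisticMean_le_add_two_mul (hconf i) hc₀ hc hi]
    _ = μ i + 4 * c := by ring

theorem exists_notMem_mean_le_add (hconf : ∀ i, |μh i - μ i| ≤ u i)
    (hMt : IsTopWithin 0 (pessimisticMean M μh u) Mt) (hne : (Mt \ M).Nonempty)
    (hc : ∀ a ∈ M ∆ Mt, u a ≤ c) (hi : i ∉ M) : ∃ b ∉ M, μ i ≤ μh b + c := by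
  suffices ∃ b ∈ Mt \ M, μ i ≤ pessimisticMean M μh u b by
    obtain ⟨b, hb, hle⟩ := this
    obtain ⟨-, hbM⟩ := Finset.mem_sdiff.1 hb
    rw [pessimisticMean_of_notMem hbM] at hle
    have hub : u b ≤ c := hc b (Finset.mem_symmDiff.2 (.inr (Finset.mem_sdiff.1 hb)))
    exact ⟨b, hbM, by linarith⟩
  have hle : μ i ≤ pessimisticMean M μh u i := le_pessimisticMean_of_notMem (hconf i) hi
  by_cases hiMt : i ∈ Mt
  · exact ⟨i, Finset.mem_sdiff.2 ⟨hiMt, hi⟩, hle⟩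
  · obtain ⟨b, hb⟩ := hne
    exact ⟨b, hb, by linarith [hMt b (Finset.mem_sdiff.1 hb).1 i hiMt]⟩

theorem exists_mem_le_mean_add (hconf : ∀ i, |μh i - μ i| ≤ u i)
    (hMt : IsTopWithin 0 (pessimisticMean M μh u) Mt) (hne : (M \ Mt).Nonempty)
    (hc : ∀ a ∈ M ∆ Mt, u a ≤ c) (hi : i ∈ M) : ∃ a ∈ M, μh a ≤ μ i + c := by
  suffices ∃ a ∈ M \ Mt, pessimisticMean M μh u a ≤ μ i by
    obtain ⟨a, ha, hle⟩ := this
    obtain ⟨haM, -⟩ := Finset.mem_sdiff.1 ha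
    rw [pessimisticMean_of_mem haM] at hle
    have hua : u a ≤ c := hc a (Finset.mem_symmDiff.2 (.inl (Finset.mem_sdiff.1 ha)))
    exact ⟨a, haM, by linarith⟩
  have hle : pessimisticMean M μh u i ≤ μ i := pessimisticMean_le_of_mem (hconf i) hi
  by_cases hiMt : i ∈ Mt
  · obtain ⟨a, ha⟩ := hne
    exact ⟨a, ha, by linarith [hMt i hiMt a (Finset.mem_sdiff.1 ha).2]⟩
  · exact ⟨i, Finset.mem_sdiff.2 ⟨hi, hiMt⟩, hle⟩

theorem isTopWithin_two_mul_of_pessimisticMean (hconf : ∀ i, |μh i - μ i| ≤ u i)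
    (hM : IsTopWithin 0 μh M) (hMt : IsTopWithin 0 (pessimisticMean M μh u) Mt)
    (hcard : M.card = Mt.card) (hne : (M ∆ Mt).Nonempty)
    (hc : ∀ a ∈ M ∆ Mt, u a ≤ c) : IsTopWithin (2 * c) μ M := by
  have hne_iff := sdiff_nonempty_comm_of_card_eq hcard
  have hsdiff : (M \ Mt).Nonempty := by
    rw [symmDiff_def, Finset.sup_eq_union, Finset.union_nonempty, ← hne_iff, or_self] at hne
    exact hne
  intro i hi j hj
  obtain ⟨a, ha, hai⟩ := exists_mem_le_mean_add hconf hMt hsdiff hc hi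
  obtain ⟨b, hb, hjb⟩ := exists_notMem_mean_le_add hconf hMt (hne_iff.1 hsdiff) hc hj
  calc μ j ≤ μh b + c := hjb
    _ ≤ μh a + c := by linarith [hM a ha b hb]
    _ ≤ μ i + c + c := by linarith
    _ = μ i + 2 * c := by ring

end pessimisticMean

theorem gap_le_of_isTopWithin_of_mem_symmDiff {ι R : Type*} [DecidableEq ι]
    [AddCommGroup R] [PartialOrder R] [IsOrderedAddMonoid R]
    {ε mK mK1 : R} {f : ι → R} {S A B : Finset ι} {e : ι}
    (hA : IsTopWithin ε f A) (hB : IsTopWithin ε f B)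
    (hSA : S.card = A.card) (hSB : S.card = B.card)
    (hin : ∀ i ∈ S, mK ≤ f i) (hout : ∀ i ∉ S, f i ≤ mK1) (he : e ∈ A ∆ B) :
    (if e ∈ S then f e - mK1 else mK - f e) ≤ ε := by
  split_ifs with heS
  · obtain ⟨j, hjS, hej⟩ : ∃ j ∉ S, f e ≤ f j + ε := by
      rcases Finset.mem_symmDiff.1 he with ⟨-, heB⟩ | ⟨-, heA⟩
      · exact hB.exists_notMem_le_add hSB heS heB
      · exact hA.exists_notMem_le_add hSA heS heA
    exact sub_le_iff_le_add'.2 (hej.trans (by gcongr; exact hout j hjS))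
  · obtain ⟨j, hjS, hje⟩ : ∃ j ∈ S, f j ≤ f e + ε := by
      rcases Finset.mem_symmDiff.1 he with ⟨heA, -⟩ | ⟨heB, -⟩
      · exact hA.exists_mem_le_add hSA heS heA
      · exact hB.exists_mem_le_add hSB heS heB
    exact sub_le_iff_le_add'.2 ((hin j hjS).trans hje)

theorem stmt_14_general {ι 𝕜 : Type*} [DecidableEq ι] [Field 𝕜] [LinearOrder 𝕜]
    [IsStrictOrderedRing 𝕜] {μ μh u : ι → 𝕜} {OPT M Mt : Finset ι} {mK mK1 : 𝕜} {e : ι}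
    (hin : ∀ i ∈ OPT, mK ≤ μ i) (hout : ∀ i ∉ OPT, μ i ≤ mK1)
    (hconf : ∀ i, |μh i - μ i| ≤ u i)
    (hM : OPT.card = M.card) (hMt : OPT.card = Mt.card)
    (hMtop : IsTopWithin 0 μh M) (hMttop : IsTopWithin 0 (pessimisticMean M μh u) Mt)
    (he : e ∈ M ∆ Mt) (hmax : ∀ a ∈ M ∆ Mt, u a ≤ u e) :
    (if e ∈ OPT then μ e - mK1 else mK - μ e) / 4 ≤ u e := by
  have hue : 0 ≤ u e := (abs_nonneg _).trans (hconf e)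
  have hMtop' : IsTopWithin (2 * u e) μ M :=
    isTopWithin_two_mul_of_pessimisticMean hconf hMtop hMttop (hM.symm.trans hMt) ⟨e, he⟩ hmax
  have hMttop' : IsTopWithin (4 * u e) μ Mt :=
    isTopWithin_four_mul_of_pessimisticMean hconf hMttop hue hmax
  rw [div_le_iff₀' four_pos]
  exact gap_le_of_isTopWithin_of_mem_symmDiff (hMtop'.mono (by linarith)) hMttop' hM hMt
    hin hout he

/-- Suppose e ∈ M △ M̃ and u_e ≥ u_a for every a ∈ M △ M̃ (so e is the arm
sampled by lil'CLUCB). Then u_e ≥ Δ_e/4. -/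
theorem stmt_14 {N K : ℕ} (hK1 : 1 ≤ K) (hKN : K < N)
    (μ : Fin N → ℝ) (OPT : Finset (Fin N)) (mK mK1 : ℝ)
    (hcard : OPT.card = K)
    (horder : mK1 < mK)
    (hin : ∀ i ∈ OPT, mK ≤ μ i)
    (hout : ∀ i ∉ OPT, μ i ≤ mK1)
    (hattK : ∃ i ∈ OPT, μ i = mK)
    (hattK1 : ∃ i ∉ OPT, μ i = mK1)
    (Δ : Fin N → ℝ)
    (hΔ : ∀ i, Δ i = if i ∈ OPT then μ i - mK1 else mK - μ i)
    (μh u : Fin N → ℝ) (hu : ∀ i, 0 < u i) (hconf : ∀ i, |μh i - μ i| < u i)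
    (M Mt : Finset (Fin N)) (hMcard : M.card = K) (hMtcard : Mt.card = K)
    (hMtop : ∀ i ∈ M, ∀ j ∉ M, μh j ≤ μh i)
    (μt : Fin N → ℝ)
    (hμt : ∀ i, μt i = if i ∈ M then μh i - u i else μh i + u i)
    (hMttop : ∀ i ∈ Mt, ∀ j ∉ Mt, μt j ≤ μt i)
    (e : Fin N) (he : e ∈ (M \ Mt) ∪ (Mt \ M))
    (hmax : ∀ a ∈ (M \ Mt) ∪ (Mt \ M), u a ≤ u e) :
    u e ≥ Δ e / 4 := by
  obtain rfl : μt = pessimisticMean M μh u := funext hμt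
  rw [ge_iff_le, hΔ]
  exact stmt_14_general hin hout (fun i => (hconf i).le) (hcard.trans hMcard.symm)
    (hcard.trans hMtcard.symm) (IsTopWithin.zero_iff.2 hMtop)
    (IsTopWithin.zero_iff.2 hMttop) he hmax
end

section
/- Suppose e ∈ OPT, e ∈ M̃ \ M, and u_e ≥ u_a for every a ∈ M △ M̃. Then u_e ≥ Δ_e/4. -/
/-!
The arms of `M` that `M̃` drops have a lower confidence bound `μ̂ - u` at least that of `e`: they
beat `e` empirically and their radius is no larger. On `M` the perturbed mean `μ̃` is this lower
confidence bound, so the arms of `M` that `M̃` keeps rank above a dropped one, hence also above `e`.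
Since `e ∈ OPT \ M`, some `a ∈ M` lies outside `OPT`, and
`μ e - 2 * u e < μ̂ e - u e ≤ μ̂ a - u a < μ a ≤ μ_(K+1)`. This gives `Δ e < 2 * u e`, which is
twice as strong as the bound `Δ e / 4 ≤ u e`.
-/

section

variable {ι R : Type*} [DecidableEq ι] {M Mt : Finset ι} {μh u μt : ι → R} {e : ι}

lemma sdiff_nonempty_of_card_eq_of_mem_sdiff {s t : Finset ι} (hcard : s.card = t.card)
    (he : e ∈ t \ s) : (s \ t).Nonempty := by
  rw [← Finset.card_pos, Finset.card_sdiff_comm hcard]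
  exact Finset.card_pos.mpr ⟨e, he⟩

lemma lowerConfidenceBound_le_of_mem [AddCommGroup R] [PartialOrder R] [IsOrderedAddMonoid R]
    (hcard : M.card = Mt.card) (hMtop : ∀ i ∈ M, ∀ j ∉ M, μh j ≤ μh i)
    (hμt : ∀ i ∈ M, μt i = μh i - u i) (hMttop : ∀ i ∈ Mt, ∀ j ∉ Mt, μt j ≤ μt i)
    (he : e ∈ Mt \ M) (hmax : ∀ a ∈ M \ Mt, u a ≤ u e) {a : ι} (ha : a ∈ M) :
    μh e - u e ≤ μh a - u a := by
  have le_of_dropped : ∀ f ∈ M \ Mt, μh e - u e ≤ μh f - u f := fun f hf ↦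
    sub_le_sub (hMtop f (Finset.mem_sdiff.mp hf).1 e (Finset.mem_sdiff.mp he).2) (hmax f hf)
  by_cases haMt : a ∈ Mt
  · obtain ⟨f, hf⟩ := sdiff_nonempty_of_card_eq_of_mem_sdiff hcard he
    obtain ⟨hfM, hfMt⟩ := Finset.mem_sdiff.mp hf
    calc μh e - u e ≤ μh f - u f := le_of_dropped f hf
      _ = μt f := (hμt f hfM).symm
      _ ≤ μt a := hMttop a haMt f hfMt
      _ = μh a - u a := hμt a ha
  · exact le_of_dropped a (Finset.mem_sdiff.mpr ⟨ha, haMt⟩)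

theorem stmt_16_general [CommRing R] [LinearOrder R] [IsStrictOrderedRing R]
    {μ : ι → R} {OPT : Finset ι} {m : R} (hOPTcard : OPT.card = M.card)
    (hout : ∀ i ∉ OPT, μ i ≤ m) (hconf : ∀ i, |μh i - μ i| < u i)
    (hcard : M.card = Mt.card) (hMtop : ∀ i ∈ M, ∀ j ∉ M, μh j ≤ μh i)
    (hμt : ∀ i ∈ M, μt i = μh i - u i) (hMttop : ∀ i ∈ Mt, ∀ j ∉ Mt, μt j ≤ μt i)
    (heO : e ∈ OPT) (he : e ∈ Mt \ M) (hmax : ∀ a ∈ M \ Mt, u a ≤ u e) :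
    μ e - m < 2 * u e := by
  have heOM : e ∈ OPT \ M := Finset.mem_sdiff.mpr ⟨heO, (Finset.mem_sdiff.mp he).2⟩
  obtain ⟨a, ha⟩ := sdiff_nonempty_of_card_eq_of_mem_sdiff hOPTcard.symm heOM
  obtain ⟨haM, haO⟩ := Finset.mem_sdiff.mp ha
  have lower_confidence_lt : μ e - 2 * u e < m :=
    calc μ e - 2 * u e < μh e - u e := by linarith [(abs_lt.mp (hconf e)).1]
      _ ≤ μh a - u a := lowerConfidenceBound_le_of_mem hcard hMtop hμt hMttop he hmax haM
      _ < μ a := by linarith [(abs_lt.mp (hconf a)).2]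
      _ ≤ m := hout a haO
  exact sub_lt_comm.mp lower_confidence_lt

end

/-- Suppose e ∈ OPT, e ∈ M̃ \ M, and u_e ≥ u_a for every a ∈ M △ M̃.
Then u_e ≥ Δ_e/4. -/
theorem stmt_16 {N K : ℕ} (hK1 : 1 ≤ K) (hKN : K < N)
    (μ : Fin N → ℝ) (OPT : Finset (Fin N)) (mK mK1 : ℝ)
    (hcard : OPT.card = K)
    (horder : mK1 < mK)
    (hin : ∀ i ∈ OPT, mK ≤ μ i)
    (hout : ∀ i ∉ OPT, μ i ≤ mK1)
    (hattK : ∃ i ∈ OPT, μ i = mK)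
    (hattK1 : ∃ i ∉ OPT, μ i = mK1)
    (Δ : Fin N → ℝ)
    (hΔ : ∀ i, Δ i = if i ∈ OPT then μ i - mK1 else mK - μ i)
    (μh u : Fin N → ℝ) (hu : ∀ i, 0 < u i) (hconf : ∀ i, |μh i - μ i| < u i)
    (M Mt : Finset (Fin N)) (hMcard : M.card = K) (hMtcard : Mt.card = K)
    (hMtop : ∀ i ∈ M, ∀ j ∉ M, μh j ≤ μh i)
    (μt : Fin N → ℝ)
    (hμt : ∀ i, μt i = if i ∈ M then μh i - u i else μh i + u i)
    (hMttop : ∀ i ∈ Mt, ∀ j ∉ Mt, μt j ≤ μt i)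
    (e : Fin N) (heO : e ∈ OPT) (he : e ∈ Mt \ M)
    (hmax : ∀ a ∈ (M \ Mt) ∪ (Mt \ M), u a ≤ u e) :
    u e ≥ Δ e / 4 := by
  have gap_lt : μ e - mK1 < 2 * u e :=
    stmt_16_general (hcard.trans hMcard.symm) hout hconf (hMcard.trans hMtcard.symm) hMtop
      (fun i hi ↦ (hμt i).trans (if_pos hi)) hMttop heO he
      fun a ha ↦ hmax a (Finset.mem_union_left _ ha)
  rw [hΔ e, if_pos heO]
  linarith [hu e]
end

section
/- For every constant C₁ > 0 there exists a constant C₂ > 0 such that for all integers N ≥ 2, all reals δ ∈ (0,1), Δ ∈ (0,1), and all reals T ≥ 3: if (1/T)·log(N·log(T)/δ) ≥ C₁²·Δ², then T ≤ (C₂/Δ²)·log(N·log(N/(Δ²·δ))/δ). -/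
/-!
Write `A = N / δ`, `D = Δ²` and `c = C₁²`, so that the hypothesis is `c D T ≤ log (A log T)`.
Since the logarithm grows slower than the square root, this already forces the crude polynomial
bound `T ≤ (4 / c²) (A / D)²`, hence `log T ≤ K log (A / D)` with `K` depending only on `c`.
Substituting this back into the hypothesis replaces `log T` by `log (A / D)` at the cost of the
additive constant `log K`, which is absorbed into a multiplicative one because
`A log (A / D) ≥ 2 log 2 > 1`.
-/

open Real

lemma log_le_two_mul_sqrt {x : ℝ} (hx : 0 ≤ x) : log x ≤ 2 * √x := by
  have h : log √x ≤ √x := log_le_self (sqrt_nonneg x)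
  rw [log_sqrt hx] at h
  linarith

lemma le_four_div_sq_of_mul_le_log {a x : ℝ} (ha : 0 < a) (h : a * x ≤ log x) :
    x ≤ 4 / a ^ 2 := by
  rcases le_or_gt x 0 with hx | hx
  · exact hx.trans (by positivity)
  have hsqrt : a * √x ≤ 2 := by
    refine le_of_mul_le_mul_right ?_ (sqrt_pos.2 hx)
    calc a * √x * √x = a * x := by rw [mul_assoc, mul_self_sqrt hx.le]
      _ ≤ 2 * √x := h.trans (log_le_two_mul_sqrt hx.le)
  rw [le_div_iff₀ (by positivity)]
  calc x * a ^ 2 = (a * √x) ^ 2 := by rw [mul_pow, sq_sqrt hx.le, mul_comm]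
    _ ≤ 2 ^ 2 := by gcongr
    _ = 4 := by norm_num

lemma le_four_mul_div_sq_of_mul_le_log_mul_log {A b T : ℝ} (hA : 1 ≤ A) (hb : 0 < b)
    (hT : 1 < T) (h : b * T ≤ log (A * log T)) : T ≤ 4 * (A / b) ^ 2 := by
  have hlogT : 0 < log T := log_pos hT
  have hlog : b / A * (A * T) ≤ log (A * T) :=
    calc b / A * (A * T) = b * T := by field_simp
      _ ≤ log (A * log T) := h
      _ ≤ log (A * T) := by gcongr; exact log_le_self (by linarith)
  calc T ≤ A * T := le_mul_of_one_le_left (by linarith) hA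
    _ ≤ 4 / (b / A) ^ 2 := le_four_div_sq_of_mul_le_log (by positivity) hlog
    _ = 4 * (A / b) ^ 2 := by field_simp

lemma exists_log_le_mul_log_of_le_mul_pow (b : ℝ) (n : ℕ) {y₀ : ℝ} (hy₀ : 1 < y₀) :
    ∃ K : ℝ, 0 < K ∧ ∀ x y : ℝ, 0 < x → y₀ ≤ y → x ≤ b * y ^ n → log x ≤ K * log y := by
  have hlogy₀ : 0 < log y₀ := log_pos hy₀
  -- The summand `1` keeps the constant positive even when `n = 0`.
  refine ⟨|log b| / log y₀ + (n + 1), by positivity, fun x y hx hy hxy => ?_⟩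
  have hy_pos : 0 < y := by linarith
  have hb : 0 < b := pos_of_mul_pos_left (hx.trans_le hxy) (by positivity)
  have hlogy : log y₀ ≤ log y := log_le_log (by linarith) hy
  have hlogb : log b ≤ |log b| / log y₀ * log y :=
    calc log b ≤ |log b| := le_abs_self _
      _ = |log b| / log y₀ * log y₀ := (div_mul_cancel₀ _ hlogy₀.ne').symm
      _ ≤ |log b| / log y₀ * log y := by gcongr
  calc log x ≤ log (b * y ^ n) := log_le_log hx hxy
    _ = log b + n * log y := by rw [log_mul hb.ne' (by positivity), log_pow]
    _ ≤ (|log b| / log y₀ + (n + 1)) * log y := by linarith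

lemma one_lt_two_mul_log_two : 1 < 2 * log 2 := by
  linarith [log_two_gt_d9]

lemma exists_le_div_mul_log_of_mul_le_log {c : ℝ} (hc : 0 < c) :
    ∃ C : ℝ, 0 < C ∧ ∀ A D T : ℝ, 2 ≤ A → 0 < D → D ≤ 1 → 1 < T →
      c * D * T ≤ log (A * log T) → T ≤ C / D * log (A * log (A / D)) := by
  obtain ⟨K, -, hK⟩ := exists_log_le_mul_log_of_le_mul_pow (4 / c ^ 2) 2 one_lt_two
  obtain ⟨M, hM_pos, hM⟩ := exists_log_le_mul_log_of_le_mul_pow K 1 one_lt_two_mul_log_two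
  refine ⟨M / c, by positivity, fun A D T hA hD_pos hD hT h => ?_⟩
  have hX : 2 ≤ A / D := hA.trans (le_div_self (by linarith) hD_pos hD)
  have hlogT_pos : 0 < log T := log_pos hT
  have hcrude : T ≤ 4 / c ^ 2 * (A / D) ^ 2 :=
    calc T ≤ 4 * (A / (c * D)) ^ 2 :=
          le_four_mul_div_sq_of_mul_le_log_mul_log (by linarith) (by positivity) hT h
      _ = 4 / c ^ 2 * (A / D) ^ 2 := by field_simp
  have hlogT : log T ≤ K * log (A / D) := hK T (A / D) (by linarith) hX hcrude
  have hbase : 2 * log 2 ≤ A * log (A / D) := by gcongr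
  have hstep : A * log T ≤ K * (A * log (A / D)) ^ 1 :=
    calc A * log T ≤ A * (K * log (A / D)) := by gcongr
      _ = K * (A * log (A / D)) ^ 1 := by ring
  have hbound : c * D * T ≤ M * log (A * log (A / D)) :=
    h.trans (hM _ _ (by positivity) hbase hstep)
  calc T ≤ M * log (A * log (A / D)) / (c * D) := (le_div_iff₀' (by positivity)).2 hbound
    _ = M / c / D * log (A * log (A / D)) := by field_simp

theorem stmt_19_general {C₁ : ℝ} (hC₁ : 0 < C₁) :
    ∃ C₂ : ℝ, 0 < C₂ ∧ ∀ N δ Δ T : ℝ, 2 ≤ N → 0 < δ → δ ≤ 1 → 0 < Δ → Δ ≤ 1 → 1 < T →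
      1 / T * log (N * log T / δ) ≥ C₁ ^ 2 * Δ ^ 2 →
      T ≤ C₂ / Δ ^ 2 * log (N * log (N / (Δ ^ 2 * δ)) / δ) := by
  obtain ⟨C₂, hC₂, hbound⟩ := exists_le_div_mul_log_of_mul_le_log (pow_pos hC₁ 2)
  refine ⟨C₂, hC₂, fun N δ Δ T hN hδ_pos hδ hΔ_pos hΔ hT h => ?_⟩
  have hA : 2 ≤ N / δ := hN.trans (le_div_self (by linarith) hδ_pos hδ)
  have hD : Δ ^ 2 ≤ 1 := pow_le_one₀ hΔ_pos.le hΔ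
  rw [ge_iff_le, one_div_mul_eq_div, le_div_iff₀ (by linarith), mul_div_right_comm] at h
  rw [mul_div_right_comm, mul_comm (Δ ^ 2), ← div_div]
  exact hbound (N / δ) (Δ ^ 2) T hA (by positivity) hD hT h

/-- For every constant C₁ > 0 there exists a constant C₂ > 0 such that for all
integers N ≥ 2, all reals δ ∈ (0,1), Δ ∈ (0,1), and all reals T ≥ 3: if
(1/T)·log(N·log(T)/δ) ≥ C₁²·Δ², then T ≤ (C₂/Δ²)·log(N·log(N/(Δ²·δ))/δ). -/
theorem stmt_19 :
    ∀ C₁ : ℝ, 0 < C₁ → ∃ C₂ : ℝ, 0 < C₂ ∧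
      ∀ (N : ℕ), 2 ≤ N → ∀ δ Δ T : ℝ, 0 < δ → δ < 1 → 0 < Δ → Δ < 1 → 3 ≤ T →
        (1 / T) * Real.log ((N : ℝ) * Real.log T / δ) ≥ C₁ ^ 2 * Δ ^ 2 →
        T ≤ (C₂ / Δ ^ 2) * Real.log ((N : ℝ) * Real.log ((N : ℝ) / (Δ ^ 2 * δ)) / δ) := by
  intro C₁ hC₁
  obtain ⟨C₂, hC₂, hbound⟩ := stmt_19_general hC₁
  exact ⟨C₂, hC₂, fun N hN δ Δ T hδ_pos hδ hΔ_pos hΔ hT =>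
    hbound N δ Δ T (mod_cast hN) hδ_pos hδ.le hΔ_pos hΔ.le (by linarith)⟩
end
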